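/- arXiv:1508.04484 — 3 statements merged into one kernel-verified Lean document; each statement's English description precedes it below -/
import Mathlib

section
/- Let k ≥ 2 and n = 2k. For every position x of Nim^=_{2k,k}, the Sprague–Grundy value satisfies: G(x) = u(x) if m(x) < z(x), and G(x) = v(x) if m(x) ≥ z(x). -/
/-- A move in Exact k-Nim `Nim^=_{n,k}`: all piles weakly decrease and
exactly `k` piles strictly decrease. -/
def ExactMove (n k : ℕ) (x x' : Fin n → ℕ) : Prop :=
  (∀ i, x' i ≤ x i) ∧ (Finset.univ.filter fun i => x' i < x i).card = k

/-- There is a chain of `m` consecutive moves starting at `x`. -/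
def HasChain (n k : ℕ) (x : Fin n → ℕ) (m : ℕ) : Prop :=
  ∃ f : Fin (m + 1) → Fin n → ℕ, f 0 = x ∧
    ∀ i : Fin m, ExactMove n k (f i.castSucc) (f i.succ)

/-- The Tetris function `T_{n,k}(x)`: the maximum number of consecutive moves
that can be made starting from `x`. -/
noncomputable def tetris (n k : ℕ) (x : Fin n → ℕ) : ℕ :=
  sSup {m | HasChain n k x m}

/-- The Sprague–Grundy function of Exact k-Nim, defined by the mex recursion
`G(x) = mex {G(x') : x → x'}`.  (For `k ≥ 1` every move satisfies `x' ≠ x`, so the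
extra hypothesis `x' ≠ x`, needed for well-foundedness, is automatic.) -/
noncomputable def grundy (n k : ℕ) (x : Fin n → ℕ) : ℕ :=
  sInf {g : ℕ | ∀ x' : Fin n → ℕ, ExactMove n k x x' → x' ≠ x → grundy n k x' ≠ g}
termination_by ∑ i, x i
decreasing_by
  rename_i hmv hne
  have hle := hmv.1
  have hex : ∃ i, x' i < x i := by
    by_contra hc
    push_neg at hc
    exact hne (funext fun i => le_antisymm (hle i) (hc i))
  obtain ⟨i, hi⟩ := hex
  exact Finset.sum_lt_sum (fun j _ => hle j) ⟨i, Finset.mem_univ i, hi⟩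

/-- `m(x)`: the minimum pile size of the position `x`. -/
noncomputable def mval (n : ℕ) (x : Fin n → ℕ) : ℕ := sInf (Set.range x)

/-- `y(x) = T_{n,k}(x₁ - m(x), …, xₙ - m(x))`. -/
noncomputable def yval (n k : ℕ) (x : Fin n → ℕ) : ℕ :=
  tetris n k fun i => x i - mval n x

/-- `z(x) = 1 + C(y(x)+1, 2)`. -/
noncomputable def zval (n k : ℕ) (x : Fin n → ℕ) : ℕ :=
  1 + (yval n k x + 1).choose 2


/-!
A position allows `t` consecutive moves iff `k * t ≤ ∑ i, min (x i) t`: always lower the `k` tallest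
piles by one. Hence lowering one pile by one lowers `T` by at most one, and `T` takes all
intermediate values between two comparable positions.

*No move preserves the value.* Half of the `2k` piles are untouched, so if the minimum drops by `j`
then the new `y` is at least `j`. With `y + 2m ≤ T` this separates positions with `m < z`, valued by
`T`, from those with `m ≥ z`, whose value is below `m`. Two positions with `m ≥ z` and the same
value have the same `y`, and minima congruent modulo `y + 1`; so a move between them cannot lower
the minimum, but then it lowers `y`.

*Every smaller value `g` is reached.* If `g < m(x)`, let `q` be the index of the block between
consecutive triangular numbers that contains `g`. Lower the minimum by at most `q` to make it
congruent to `g + 1` modulo `q + 1`, while bringing `y` to `q`. If `m(x) ≤ g`, either `T = g` is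
reachable by emptying a pile, so that `m = 0`, or it is reached by lowering a smallest pile and
`k - 1` others by one, except that the smallest may lose more; then `y` does not drop, so `m < z`
persists.
-/

open Finset Function

section SumMin

variable {ι : Type*} [Fintype ι] {x : ι → ℕ} {k s t : ℕ}

lemma mul_le_sum_min_of_le_card {A : Finset ι} (hA : k ≤ #A) (hx : ∀ i ∈ A, t ≤ x i) :
    k * t ≤ ∑ i, min (x i) t :=
  calc k * t ≤ #A * t := Nat.mul_le_mul_right t hA
    _ ≤ ∑ i ∈ A, min (x i) t := card_nsmul_le_sum A _ t fun i hi => le_min (hx i hi) le_rfl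
    _ ≤ ∑ i, min (x i) t := sum_le_univ_sum_of_nonneg fun _ => Nat.zero_le _

lemma le_card_pos_of_mul_le_sum_min (h : k * (t + 1) ≤ ∑ i, min (x i) (t + 1)) :
    k ≤ #{i | 0 < x i} := by
  refine Nat.le_of_mul_le_mul_right (h.trans ?_) t.succ_pos
  calc ∑ i, min (x i) (t + 1) ≤ ∑ i, if 0 < x i then t + 1 else 0 :=
        sum_le_sum fun i _ => by split_ifs <;> omega
    _ = #{i | 0 < x i} * (t + 1) := by rw [← sum_filter, sum_const, smul_eq_mul]

-- Concavity of `t ↦ min a t`, with the divisions cleared.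
lemma min_mul_le_min_mul (a : ℕ) (hst : s ≤ t) : min a t * s ≤ min a s * t := by
  rcases le_total a s with has | hsa
  · rw [min_eq_left has, min_eq_left (has.trans hst)]
    exact Nat.mul_le_mul_left a hst
  · rw [min_eq_right hsa, Nat.mul_comm s t]
    exact Nat.mul_le_mul_right s (min_le_right a t)

lemma mul_le_sum_min_of_le (hst : s ≤ t) (h : k * t ≤ ∑ i, min (x i) t) :
    k * s ≤ ∑ i, min (x i) s := by
  obtain rfl | ht := Nat.eq_zero_or_pos t
  · simp [Nat.le_zero.1 hst]
  refine Nat.le_of_mul_le_mul_right ?_ ht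
  calc k * s * t = k * t * s := Nat.mul_right_comm k s t
    _ ≤ (∑ i, min (x i) t) * s := Nat.mul_le_mul_right s h
    _ = ∑ i, min (x i) t * s := sum_mul ..
    _ ≤ ∑ i, min (x i) s * t := sum_le_sum fun i _ => min_mul_le_min_mul (x i) hst
    _ = (∑ i, min (x i) s) * t := (sum_mul ..).symm

variable [DecidableEq ι]

lemma mul_le_sum_min_piecewise_sub_one {M : Finset ι} (hM : #M ≤ k)
    (hbig : k ≤ #{i | t < x i} ∨ ∀ i, t < x i → i ∈ M)
    (h : k * (t + 1) ≤ ∑ i, min (x i) (t + 1)) :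
    k * t ≤ ∑ i, min (M.piecewise (x - 1) x i) t := by
  rcases hbig with hbig | hbig
  · refine mul_le_sum_min_of_le_card hbig fun i hi => ?_
    have hti : t < x i := (mem_filter.1 hi).2
    by_cases hiM : i ∈ M <;> simp [hiM] <;> omega
  · have hsum : ∑ i, min (x i) (t + 1) ≤ ∑ i, min (M.piecewise (x - 1) x i) t + #M :=
      calc ∑ i, min (x i) (t + 1)
          ≤ ∑ i, (min (M.piecewise (x - 1) x i) t + if i ∈ M then 1 else 0) := by
            refine sum_le_sum fun i _ => ?_
            have hi := hbig i
            by_cases hiM : i ∈ M <;> simp [hiM] at hi ⊢ <;> omega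
        _ = ∑ i, min (M.piecewise (x - 1) x i) t + #M := by
            rw [sum_add_distrib, sum_boole, filter_univ_mem, Nat.cast_id]
    rw [Nat.mul_succ] at h
    omega

lemma exists_mul_le_sum_min_piecewise_sub_one (h : k * (t + 1) ≤ ∑ i, min (x i) (t + 1)) :
    ∃ M : Finset ι, #M = k ∧ (∀ i ∈ M, 0 < x i) ∧
      k * t ≤ ∑ i, min (M.piecewise (x - 1) x i) t := by
  have hpos := le_card_pos_of_mul_le_sum_min h
  have hsub : univ.filter (t < x ·) ⊆ univ.filter (0 < x ·) :=
    monotone_filter_right _ fun i _ hi => (Nat.zero_le t).trans_lt hi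
  rcases le_total k #{i | t < x i} with hbig | hbig
  · obtain ⟨M, hMsub, hM⟩ := exists_subset_card_eq hbig
    exact ⟨M, hM, fun i hi => (mem_filter.1 (hsub (hMsub hi))).2,
      mul_le_sum_min_piecewise_sub_one hM.le (.inl hbig) h⟩
  · obtain ⟨M, hbigM, hMsub, hM⟩ := exists_subsuperset_card_eq hsub hbig hpos
    exact ⟨M, hM, fun i hi => (mem_filter.1 (hMsub hi)).2,
      mul_le_sum_min_piecewise_sub_one hM.le (.inr fun i hi => hbigM (by simpa using hi)) h⟩

end SumMin

section Move

variable {n k : ℕ} {x w : Fin n → ℕ}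

lemma ExactMove.le (h : ExactMove n k x w) : w ≤ x := h.1

lemma ExactMove.lt (hk : 0 < k) (h : ExactMove n k x w) : w < x := by
  obtain ⟨i, hi⟩ := card_pos.1 (hk.trans_eq h.2.symm)
  exact Pi.lt_def.2 ⟨h.le, i, (mem_filter.1 hi).2⟩

lemma exactMove_of_card {M : Finset (Fin n)} (hM : #M = k) (hlt : ∀ i ∈ M, w i < x i)
    (heq : ∀ i ∉ M, w i = x i) : ExactMove n k x w := by
  refine ⟨fun i => ?_, ?_⟩
  · by_cases hi : i ∈ M
    exacts [(hlt i hi).le, (heq i hi).le]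
  · suffices hfilter : (univ.filter fun i => w i < x i) = M by rw [hfilter, hM]
    ext i
    by_cases hi : i ∈ M
    · simp [hi, hlt i hi]
    · simp [hi, heq i hi]

lemma exactMove_add_const_iff (c : ℕ) :
    ExactMove n k (fun i => x i + c) (fun i => w i + c) ↔ ExactMove n k x w := by
  simp [ExactMove]

lemma ExactMove.mul_succ_le_sum_min {t : ℕ} (h : ExactMove n k x w)
    (hw : k * t ≤ ∑ i, min (w i) t) : k * (t + 1) ≤ ∑ i, min (x i) (t + 1) :=
  calc k * (t + 1) = k * t + #{i | w i < x i} := by rw [h.2, Nat.mul_succ]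
    _ ≤ ∑ i, min (w i) t + #{i | w i < x i} := Nat.add_le_add_right hw _
    _ = ∑ i, (min (w i) t + if w i < x i then 1 else 0) := by
        rw [sum_add_distrib, sum_boole, Nat.cast_id]
    _ ≤ ∑ i, min (x i) (t + 1) := sum_le_sum fun i _ => by
        have : w i ≤ x i := h.le i
        split_ifs <;> omega

lemma hasChain_zero : HasChain n k x 0 := ⟨fun _ => x, rfl, fun i => i.elim0⟩

lemma hasChain_succ_iff {t : ℕ} :
    HasChain n k x (t + 1) ↔ ∃ w, ExactMove n k x w ∧ HasChain n k w t := by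
  constructor
  · rintro ⟨f, rfl, hf⟩
    exact ⟨f 1, hf 0, fun i => f i.succ, rfl, fun i => hf i.succ⟩
  · rintro ⟨w, hxw, f, rfl, hf⟩
    exact ⟨Fin.cons x f, rfl, Fin.cases hxw hf⟩

lemma hasChain_iff_mul_le_sum_min {t : ℕ} :
    HasChain n k x t ↔ k * t ≤ ∑ i, min (x i) t := by
  induction t generalizing x with
  | zero => simp [hasChain_zero]
  | succ t ih =>
    rw [hasChain_succ_iff]
    constructor
    · rintro ⟨w, hxw, hw⟩
      exact hxw.mul_succ_le_sum_min (ih.1 hw)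
    · intro h
      obtain ⟨M, hM, hpos, hle⟩ := exists_mul_le_sum_min_piecewise_sub_one h
      exact ⟨M.piecewise (x - 1) x, exactMove_of_card hM
        (fun i hi => by simpa [hi] using hpos i hi) (fun i hi => by simp [hi]), ih.2 hle⟩

end Move

section Tetris

variable {n k t : ℕ} {x w : Fin n → ℕ}

lemma le_tetris_iff (hk : 0 < k) : t ≤ tetris n k x ↔ k * t ≤ ∑ i, min (x i) t := by
  have hset : {m | HasChain n k x m} = {m | k * m ≤ ∑ i, min (x i) m} :=
    Set.ext fun _ => hasChain_iff_mul_le_sum_min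
  have hbdd : BddAbove {m | k * m ≤ ∑ i, min (x i) m} := by
    refine ⟨∑ i, x i, fun m hm => ?_⟩
    calc m ≤ k * m := Nat.le_mul_of_pos_left m hk
      _ ≤ ∑ i, min (x i) m := hm
      _ ≤ ∑ i, x i := sum_le_sum fun i _ => min_le_left _ _
  rw [tetris, hset]
  exact ⟨fun h => mul_le_sum_min_of_le h (Nat.sSup_mem ⟨0, by simp⟩ hbdd),
    fun h => le_csSup hbdd h⟩

lemma tetris_mono (hk : 0 < k) : Monotone (tetris n k) := fun _ _ hxw =>
  (le_tetris_iff hk).2 <| ((le_tetris_iff hk).1 le_rfl).trans <|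
    sum_le_sum fun i _ => min_le_min_right _ (hxw i)

lemma ExactMove.tetris_lt (hk : 0 < k) (h : ExactMove n k x w) : tetris n k w < tetris n k x :=
  (le_tetris_iff hk).2 (h.mul_succ_le_sum_min ((le_tetris_iff hk).1 le_rfl))

lemma le_tetris_of_le_card (hk : 0 < k) {A : Finset (Fin n)} (hA : k ≤ #A)
    (hx : ∀ i ∈ A, t ≤ x i) : t ≤ tetris n k x :=
  (le_tetris_iff hk).2 (mul_le_sum_min_of_le_card hA hx)

lemma tetris_le_apply_of_card_le (hk : 0 < k) {A : Finset (Fin n)} (hA : #A ≤ k)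
    (hx : ∀ i ∉ A, x i = 0) {b : Fin n} (hb : b ∈ A) : tetris n k x ≤ x b := by
  by_contra! hlt
  have h : k * (x b + 1) ≤ ∑ i, min (x i) (x b + 1) := (le_tetris_iff hk).1 hlt
  refine h.not_gt ?_
  calc ∑ i, min (x i) (x b + 1) = ∑ i ∈ A, min (x i) (x b + 1) :=
        (sum_subset (subset_univ A) fun i _ hi => by simp [hx i hi]).symm
    _ < ∑ _i ∈ A, (x b + 1) :=
        sum_lt_sum (fun _ _ => min_le_right _ _) ⟨b, hb, by simp⟩
    _ ≤ k * (x b + 1) := by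
        rw [sum_const, smul_eq_mul]
        exact Nat.mul_le_mul_right _ hA

lemma tetris_add_two_mul_le_tetris_add_const (hk : 0 < k) (hn : 2 * k ≤ n) (x : Fin n → ℕ)
    (c : ℕ) : tetris n k x + 2 * c ≤ tetris n k fun i => x i + c := by
  have h := (le_tetris_iff (x := x) hk).1 le_rfl
  set y := tetris n k x
  refine (le_tetris_iff hk).2 ?_
  calc k * (y + 2 * c) = k * y + 2 * k * c := by ring
    _ ≤ ∑ i, min (x i) y + n * c := Nat.add_le_add h (Nat.mul_le_mul_right c hn)
    _ = ∑ i, (min (x i) y + c) := by simp [sum_add_distrib]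
    _ ≤ ∑ i, min (x i + c) (y + 2 * c) := sum_le_sum fun i _ => by omega

lemma le_tetris_piecewise_sub_one (hk : 0 < k) {M : Finset (Fin n)} (hM : #M ≤ k)
    (hbig : k ≤ #{i | t < x i} ∨ ∀ i, t < x i → i ∈ M) (h : t < tetris n k x) :
    t ≤ tetris n k (M.piecewise (x - 1) x) :=
  (le_tetris_iff hk).2 (mul_le_sum_min_piecewise_sub_one hM hbig ((le_tetris_iff hk).1 h))

lemma le_tetris_update_sub_one (hk : 0 < k) (b : Fin n) (h : t < tetris n k x) :
    t ≤ tetris n k (update x b (x b - 1)) := by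
  rcases le_or_gt k #{i | t < x i} with hbig | hbig
  · have hle :=
      le_tetris_piecewise_sub_one (M := {b}) hk ((card_singleton b).trans_le hk) (.inl hbig) h
    rwa [piecewise_singleton] at hle
  · -- Lowering all piles above `t` along with `b` only makes the claim stronger.
    refine (le_tetris_piecewise_sub_one hk ((card_insert_le b _).trans hbig)
      (.inr fun i hi => mem_insert_of_mem (by simpa using hi)) h).trans (tetris_mono hk ?_)
    rw [piecewise_insert]
    exact update_le_update_iff.2 ⟨le_rfl, fun i _ =>
      piecewise_le_of_le_of_le _ (fun _ => Nat.sub_le _ _) le_rfl i⟩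

lemma exists_mem_Icc_tetris_eq (hk : 0 < k) {L H : Fin n → ℕ} (hLH : L ≤ H)
    (hL : tetris n k L ≤ t) (hH : t ≤ tetris n k H) : ∃ w ∈ Set.Icc L H, tetris n k w = t := by
  obtain ⟨w, ⟨⟨hLw, hwH⟩, htw⟩, hmin⟩ :=
    ((Set.finite_Icc L H).inter_of_left {w | t ≤ tetris n k w}).exists_minimal
      ⟨H, ⟨hLH, le_rfl⟩, hH⟩
  refine ⟨w, ⟨hLw, hwH⟩, htw.antisymm' ?_⟩
  by_contra! hlt
  have hne : L ≠ w := by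
    rintro rfl
    exact hlt.not_ge hL
  obtain ⟨b, hb⟩ := (Pi.lt_def.1 (hLw.lt_of_ne hne)).2
  have hle : update w b (w b - 1) ≤ w := update_le_self_iff.2 (Nat.sub_le _ _)
  have hge : w ≤ update w b (w b - 1) :=
    hmin ⟨⟨le_update_iff.2 ⟨by omega, fun i _ => hLw i⟩, hle.trans hwH⟩,
      le_tetris_update_sub_one hk b hlt⟩ hle
  have hgeb : w b ≤ update w b (w b - 1) b := hge b
  rw [update_self] at hgeb
  omega

end Tetris

section Minimum

variable {n k : ℕ} {x w : Fin n → ℕ}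

lemma mval_le (x : Fin n → ℕ) (i : Fin n) : mval n x ≤ x i := Nat.sInf_le ⟨i, rfl⟩

lemma exists_apply_eq_mval (hn : 0 < n) (x : Fin n → ℕ) : ∃ a, x a = mval n x :=
  haveI : NeZero n := ⟨hn.ne'⟩
  Nat.sInf_mem (Set.range_nonempty x)

lemma mval_eq_of_forall_le {a : Fin n} (ha : ∀ i, x a ≤ x i) : mval n x = x a :=
  (mval_le x a).antisymm (le_csInf ⟨x a, a, rfl⟩ (Set.forall_mem_range.2 ha))

lemma mval_mono : Monotone (mval n) := by
  intro x w hxw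
  rcases isEmpty_or_nonempty (Fin n) with _ | _
  · exact (congrArg (mval n) (Subsingleton.elim x w)).le
  · exact le_csInf (Set.range_nonempty w) <|
      Set.forall_mem_range.2 fun i => (mval_le x i).trans (hxw i)

lemma mval_add_const {p : Fin n} (hp : w p = 0) (c : ℕ) : mval n (fun i => w i + c) = c := by
  rw [mval_eq_of_forall_le (a := p) fun i => by omega, hp, Nat.zero_add]

lemma yval_add_const {p : Fin n} (hp : w p = 0) (c : ℕ) :
    yval n k (fun i => w i + c) = tetris n k w := by
  simp only [yval, mval_add_const hp, Nat.add_sub_cancel]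

lemma yval_add_two_mul_mval_le_tetris (hk : 0 < k) (hn : 2 * k ≤ n) (x : Fin n → ℕ) :
    yval n k x + 2 * mval n x ≤ tetris n k x := by
  simpa only [yval, Nat.sub_add_cancel (mval_le x _)] using
    tetris_add_two_mul_le_tetris_add_const hk hn (fun i => x i - mval n x) (mval n x)

lemma ExactMove.mval_le_mval_add_yval (hk : 0 < k) (hn : 2 * k ≤ n) (h : ExactMove n k x w) :
    mval n x ≤ mval n w + yval n k w := by
  have hcard : k ≤ #{i | ¬w i < x i} := by
    have := card_filter_add_card_filter_not (s := univ) fun i => w i < x i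
    rw [h.2, card_univ, Fintype.card_fin] at this
    omega
  have hle : mval n x - mval n w ≤ yval n k w := by
    refine le_tetris_of_le_card hk hcard fun i hi => Nat.sub_le_sub_right ?_ _
    exact (mval_le x i).trans (not_lt.1 (mem_filter.1 hi).2)
  omega

lemma ExactMove.yval_lt (hk : 0 < k) (h : ExactMove n k x w) (hm : mval n w = mval n x) :
    yval n k w < yval n k x := by
  refine ExactMove.tetris_lt hk ((exactMove_add_const_iff (mval n x)).1 ?_)
  simpa only [Nat.sub_add_cancel (mval_le x _), hm,
    Nat.sub_add_cancel (hm ▸ mval_le w _)] using h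

lemma exists_exactMove_of_sub {p : Fin n} {c : ℕ} (hc : ∀ i, c ≤ x i)
    (h : ExactMove n k (fun i => x i - c) w) (hp : w p = 0) :
    ∃ w', ExactMove n k x w' ∧ mval n w' = c ∧ yval n k w' = tetris n k w := by
  refine ⟨fun i => w i + c, ?_, mval_add_const hp c, yval_add_const hp c⟩
  simpa only [Nat.sub_add_cancel (hc _)] using (exactMove_add_const_iff c).2 h

end Minimum

section TriangularBlock

/-- The `q`-th block of `q + 1` consecutive integers between two triangular numbers. It contains
the value of every position with `y(x) = q` and `m(x) ≥ z(x)`. -/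
def triangularBlock (q : ℕ) : Set ℕ := Set.Ico ((q + 1).choose 2) ((q + 2).choose 2)

/-- The value `v(x)` as a function of `m = m(x)` and `y = y(x)`. The subtraction is
truncated unless `(y + 1).choose 2 < m`, that is, `m(x) ≥ z(x)`. -/
def cyclicValue (m y : ℕ) : ℕ := (y + 1).choose 2 + (m - (1 + (y + 1).choose 2)) % (y + 1)

variable {m m' q q' g y y' : ℕ}

lemma choose_two_succ (q : ℕ) : (q + 2).choose 2 = (q + 1).choose 2 + (q + 1) := by
  rw [Nat.choose_succ_succ', Nat.choose_one_right, Nat.add_comm]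

lemma strictMono_succ_choose_two : StrictMono fun q : ℕ => (q + 1).choose 2 :=
  strictMono_nat_of_lt_succ fun q => by
    rw [choose_two_succ]
    exact Nat.lt_add_of_pos_right q.succ_pos

lemma exists_mem_triangularBlock (g : ℕ) : ∃ q, g ∈ triangularBlock q := by
  have hcover := iUnion_Ico_map_succ_eq_Ici
    (fun q => strictMono_succ_choose_two.monotone bot_le)
    strictMono_succ_choose_two.not_bddAbove_range_of_wellFoundedLT
  exact Set.mem_iUnion.1 (hcover.ge (Nat.zero_le g))

lemma eq_of_mem_triangularBlock (h : g ∈ triangularBlock q) (h' : g ∈ triangularBlock q') :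
    q = q' := by
  by_contra hne
  exact Set.disjoint_left.1
    (strictMono_succ_choose_two.monotone.pairwise_disjoint_on_Ico_succ hne) h h'

lemma le_of_mem_triangularBlock_of_lt (h : g ∈ triangularBlock q) (hg : g < (y + 2).choose 2) :
    q ≤ y :=
  Nat.lt_succ_iff.1 (strictMono_succ_choose_two.lt_iff_lt.1 (h.1.trans_lt hg))

lemma cyclicValue_mem_triangularBlock (m y : ℕ) : cyclicValue m y ∈ triangularBlock y := by
  refine ⟨Nat.le_add_right _ _, ?_⟩
  rw [choose_two_succ]
  exact Nat.add_lt_add_left (Nat.mod_lt _ y.succ_pos) _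

lemma cyclicValue_lt (h : (y + 1).choose 2 < m) : cyclicValue m y < m := by
  have := Nat.mod_le (m - (1 + (y + 1).choose 2)) (y + 1)
  unfold cyclicValue
  omega

lemma eq_and_modEq_of_cyclicValue_eq (hm : (y + 1).choose 2 < m) (hm' : (y' + 1).choose 2 < m')
    (h : cyclicValue m y = cyclicValue m' y') : y = y' ∧ m ≡ m' [MOD y + 1] := by
  obtain rfl : y = y' := eq_of_mem_triangularBlock (cyclicValue_mem_triangularBlock m y)
    (h ▸ cyclicValue_mem_triangularBlock m' y')
  refine ⟨rfl, ?_⟩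
  have hmod : m - (1 + (y + 1).choose 2) ≡ m' - (1 + (y + 1).choose 2) [MOD y + 1] :=
    Nat.add_left_cancel h
  simpa only [Nat.sub_add_cancel (show 1 + (y + 1).choose 2 ≤ m by omega),
    Nat.sub_add_cancel (show 1 + (y + 1).choose 2 ≤ m' by omega)] using
    hmod.add_right (1 + (y + 1).choose 2)

lemma cyclicValue_eq_of_modEq (hg : g ∈ triangularBlock y) (hgm : g < m)
    (hmod : g + 1 ≡ m [MOD y + 1]) : cyclicValue m y = g := by
  obtain ⟨hle, hlt⟩ := hg
  rw [choose_two_succ] at hlt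
  have hmod' : m - (1 + (y + 1).choose 2) ≡ g - (y + 1).choose 2 [MOD y + 1] := by
    refine Nat.ModEq.add_right_cancel' (1 + (y + 1).choose 2) ?_
    rw [show g - (y + 1).choose 2 + (1 + (y + 1).choose 2) = g + 1 by omega,
      Nat.sub_add_cancel (by omega)]
    exact hmod.symm
  have hmodeq : (m - (1 + (y + 1).choose 2)) % (y + 1) = g - (y + 1).choose 2 :=
    Eq.trans hmod' (Nat.mod_eq_of_lt (by omega))
  rw [cyclicValue, hmodeq]
  omega

end TriangularBlock

section NimValue

variable {n k : ℕ} {x w : Fin n → ℕ}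

/-- The closed form claimed for the Sprague–Grundy value: `u(x)` if `m(x) < z(x)`, else `v(x)`. -/
noncomputable def nimValue (n k : ℕ) (x : Fin n → ℕ) : ℕ :=
  if mval n x < zval n k x then tetris n k x else cyclicValue (mval n x) (yval n k x)

lemma nimValue_of_lt (h : mval n x < zval n k x) : nimValue n k x = tetris n k x := if_pos h

lemma nimValue_of_le (h : zval n k x ≤ mval n x) :
    nimValue n k x = cyclicValue (mval n x) (yval n k x) := if_neg h.not_gt

lemma choose_two_lt_mval (h : zval n k x ≤ mval n x) : (yval n k x + 1).choose 2 < mval n x := by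
  rwa [zval, Nat.one_add] at h

lemma nimValue_lt_mval (h : zval n k x ≤ mval n x) : nimValue n k x < mval n x :=
  (nimValue_of_le h).trans_lt (cyclicValue_lt (choose_two_lt_mval h))

lemma ExactMove.cyclicValue_ne (hk : 0 < k) (hn : 2 * k ≤ n) (h : ExactMove n k x w)
    (hx : zval n k x ≤ mval n x) (hw : zval n k w ≤ mval n w) :
    cyclicValue (mval n w) (yval n k w) ≠ cyclicValue (mval n x) (yval n k x) := by
  intro heq
  obtain ⟨hy, hmod⟩ :=
    eq_and_modEq_of_cyclicValue_eq (choose_two_lt_mval hw) (choose_two_lt_mval hx) heq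
  have hm : mval n w ≤ mval n x := mval_mono h.le
  have hdvd : yval n k w + 1 ∣ mval n x - mval n w := (Nat.modEq_iff_dvd' hm).1 hmod
  have hlt : mval n x - mval n w < yval n k w + 1 := by
    have := h.mval_le_mval_add_yval hk hn
    omega
  have hmeq : mval n w = mval n x :=
    hm.antisymm (Nat.sub_eq_zero_iff_le.1 (Nat.eq_zero_of_dvd_of_lt hdvd hlt))
  exact (h.yval_lt hk hmeq).ne hy

lemma ExactMove.nimValue_ne (hk : 0 < k) (hn : 2 * k ≤ n) (h : ExactMove n k x w) :
    nimValue n k w ≠ nimValue n k x := by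
  have hTw := yval_add_two_mul_mval_le_tetris hk hn w
  have hTx := yval_add_two_mul_mval_le_tetris hk hn x
  have hy := h.mval_le_mval_add_yval hk hn
  rcases lt_or_ge (mval n w) (zval n k w) with hw | hw <;>
    rcases lt_or_ge (mval n x) (zval n k x) with hx | hx
  · rw [nimValue_of_lt hw, nimValue_of_lt hx]
    exact (h.tetris_lt hk).ne
  · have := nimValue_lt_mval hx
    rw [nimValue_of_lt hw]
    omega
  · have := (nimValue_lt_mval hw).trans_le (mval_mono h.le)
    rw [nimValue_of_lt hx]
    omega
  · rw [nimValue_of_le hw, nimValue_of_le hx]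
    exact h.cyclicValue_ne hk hn hx hw

end NimValue

lemma grundy_eq_of_forall {n k : ℕ} (hk : 0 < k) {F : (Fin n → ℕ) → ℕ}
    (hne : ∀ x w, ExactMove n k x w → F w ≠ F x)
    (hreach : ∀ x, ∀ g < F x, ∃ w, ExactMove n k x w ∧ F w = g) (x : Fin n → ℕ) :
    grundy n k x = F x := by
  induction x using WellFoundedLT.induction with
  | _ x ih =>
    have hF : ∀ w, ExactMove n k x w → grundy n k w = F w := fun w hw => ih w (hw.lt hk)
    rw [grundy]
    refine IsLeast.csInf_eq ⟨fun w hw _ => ?_, fun g hg => ?_⟩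
    · rw [hF w hw]
      exact hne x w hw
    · by_contra! hlt
      obtain ⟨w, hw, hwg⟩ := hreach x g hlt
      exact hg w hw (hw.lt hk).ne ((hF w hw).trans hwg)

lemma exists_two_smallest {ι α : Type*} [Finite ι] [Nontrivial ι] [LinearOrder α] (x : ι → α) :
    ∃ a e, e ≠ a ∧ (∀ i, x a ≤ x i) ∧ ∀ i ≠ a, x e ≤ x i := by
  obtain ⟨a, ha⟩ := Finite.exists_min x
  obtain ⟨b, hb⟩ := exists_ne a
  have : Nonempty {i // i ≠ a} := ⟨⟨b, hb⟩⟩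
  obtain ⟨⟨e, hea⟩, he⟩ := Finite.exists_min fun i : {i // i ≠ a} => x i
  exact ⟨a, e, hea, ha, fun i hi => he ⟨i, hi⟩⟩

lemma card_compl_pair {ι : Type*} [Fintype ι] [DecidableEq ι] {a b : ι} (hab : a ≠ b) :
    #({a, b}ᶜ : Finset ι) = Fintype.card ι - 2 := by
  rw [card_compl, card_pair hab]

section Reachability

variable {n k q g : ℕ} {x H : Fin n → ℕ} {a b e p : Fin n} {M S : Finset (Fin n)}

lemma exists_exactMove_le_tetris_eq (hk : 0 < k) (hn : n ≤ 2 * k) (hM : #M = k)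
    (hlt : ∀ i ∈ M, H i < x i) (heq : ∀ i ∉ M, H i = x i) (hb : b ∉ M) (hbq : x b ≤ q)
    (hq : q ≤ tetris n k H) :
    ∃ w ≤ H, ExactMove n k x w ∧ tetris n k w = q := by
  have hcompl : #Mᶜ ≤ k := by
    rw [card_compl, hM, Fintype.card_fin]
    omega
  have hL : tetris n k (M.piecewise 0 H) ≤ q :=
    calc tetris n k (M.piecewise 0 H) ≤ M.piecewise 0 H b :=
          tetris_le_apply_of_card_le hk hcompl
            (fun i hi => piecewise_eq_of_mem _ _ _ (notMem_compl.1 hi)) (mem_compl.2 hb)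
      _ = x b := by rw [piecewise_eq_of_notMem _ _ _ hb, heq b hb]
      _ ≤ q := hbq
  obtain ⟨w, ⟨hLw, hwH⟩, hw⟩ := exists_mem_Icc_tetris_eq hk
    (M.piecewise_le_of_le_of_le (fun _ => Nat.zero_le _) le_rfl) hL hq
  refine ⟨w, hwH, exactMove_of_card hM (fun i hi => (hwH i).trans_lt (hlt i hi)) fun i hi => ?_, hw⟩
  rw [← heq i hi]
  exact (hwH i).antisymm (by simpa [hi] using hLw i)

lemma exists_exactMove_of_apply_eq_zero (hk : 0 < k) (hn : n ≤ 2 * k) (ha : x a = 0)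
    (hq : q < tetris n k x) :
    ∃ w, w a = 0 ∧ ExactMove n k x w ∧ tetris n k w = q := by
  obtain ⟨M, hM, hpos, hle⟩ :=
    exists_mul_le_sum_min_piecewise_sub_one ((le_tetris_iff hk).1 hq)
  have haM : a ∉ M := fun haM => (hpos a haM).ne' ha
  obtain ⟨w, hwH, hmove, hw⟩ := exists_exactMove_le_tetris_eq hk hn hM
    (fun i hi => by simpa [hi] using hpos i hi) (fun i hi => piecewise_eq_of_notMem _ _ _ hi) haM
    (ha ▸ Nat.zero_le q) ((le_tetris_iff hk).2 hle)
  refine ⟨w, Nat.le_zero.1 ((hwH a).trans_eq ?_), hmove, hw⟩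
  rw [piecewise_eq_of_notMem _ _ _ haM, ha]

lemma exists_exactMove_emptying (hn : n ≤ 2 * k) (hpos : ∀ i, 0 < x i) (hbp : b ≠ p)
    (hpS : p ∉ S) (hbS : b ∉ S) (hS : #S + 1 = k) (hbq : x b ≤ q)
    (hq : q ≤ tetris n k (update (S.piecewise (x - 1) x) p 0)) :
    ∃ w, w p = 0 ∧ ExactMove n k x w ∧ tetris n k w = q := by
  have hlt : ∀ i ∈ insert p S, update (S.piecewise (x - 1) x) p 0 i < x i := by
    intro i hi
    obtain rfl | hip := eq_or_ne i p
    · simpa using hpos i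
    · simpa [hip, (mem_insert.1 hi).resolve_left hip] using hpos i
  have heq : ∀ i ∉ insert p S, update (S.piecewise (x - 1) x) p 0 i = x i := by
    intro i hi
    obtain ⟨hip, hiS⟩ : i ≠ p ∧ i ∉ S := by simpa using hi
    simp [hip, hiS]
  obtain ⟨w, hwH, hmove, hw⟩ := exists_exactMove_le_tetris_eq (by omega) hn
    (by rw [card_insert_of_notMem hpS, hS]) hlt heq (by simp [hbp, hbS]) hbq hq
  exact ⟨w, by simpa using hwH p, hmove, hw⟩

lemma exists_exactMove_emptying_of_two_smallest (hk : k + 2 ≤ n) (hn : n ≤ 2 * k)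
    (hpos : ∀ i, 0 < x i) (hea : e ≠ a) (he : ∀ i ≠ a, x e ≤ x i) (haS : a ∉ S) (heS : e ∉ S)
    (hS : #S + 1 = k) (haq : x a ≤ q)
    (hq : q ≤ tetris n k (update (S.piecewise (x - 1) x) a 0)) :
    ∃ p w, w p = 0 ∧ ExactMove n k x w ∧ tetris n k w = q := by
  rcases le_or_gt (x e) q with heq | hqe
  · exact ⟨a, exists_exactMove_emptying hn hpos hea haS heS hS heq hq⟩
  · -- All piles but `a` exceed `q`, so even after emptying `e` enough tall piles remain.
    refine ⟨e, exists_exactMove_emptying hn hpos hea.symm heS haS hS haq ?_⟩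
    refine le_tetris_of_le_card (A := {a, e}ᶜ) (by omega)
      (by rw [card_compl_pair hea.symm, Fintype.card_fin]; omega) fun i hi => ?_
    obtain ⟨hia, hie⟩ : i ≠ a ∧ i ≠ e := by simpa using hi
    have := he i hia
    by_cases hiS : i ∈ S <;> simp [hie, hiS] <;> omega

lemma exists_exactMove_mval_eq (hn₀ : 0 < n) (hn : n ≤ 2 * k) (hq : q < yval n k x) :
    ∃ w, ExactMove n k x w ∧ mval n w = mval n x ∧ yval n k w = q := by
  obtain ⟨a, ha⟩ := exists_apply_eq_mval hn₀ x
  obtain ⟨w, hwa, hmove, rfl⟩ := exists_exactMove_of_apply_eq_zero (a := a) (by omega)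
    hn (Nat.sub_eq_zero_of_le ha.le) hq
  exact exists_exactMove_of_sub (mval_le x) hmove hwa

lemma exists_exactMove_mval_eq_sub {j : ℕ} (hk : k + 2 ≤ n) (hn : n ≤ 2 * k) (hj : 0 < j)
    (hjm : j ≤ mval n x) (hjq : j ≤ q) (hq : q ≤ yval n k x) :
    ∃ w, ExactMove n k x w ∧ mval n w = mval n x - j ∧ yval n k w = q := by
  have : Nontrivial (Fin n) := Fin.nontrivial_iff_two_le.2 (by omega)
  obtain ⟨a, e, hea, ha, he⟩ := exists_two_smallest x
  obtain ⟨S, hSsub, hS⟩ : ∃ S ⊆ ({a, e}ᶜ : Finset (Fin n)), #S = k - 1 :=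
    exists_subset_card_eq (by rw [card_compl_pair hea.symm, Fintype.card_fin]; omega)
  have hm : mval n x = x a := mval_eq_of_forall_le ha
  rw [hm] at hjm ⊢
  set d : Fin n → ℕ := fun i => x i - (x a - j) with hd
  have hq' : q ≤ tetris n k (update (S.piecewise (d - 1) d) a 0) := by
    refine hq.trans (tetris_mono (by omega) fun i => ?_)
    obtain rfl | hia := eq_or_ne i a
    · simp [hm]
    · have := ha i
      by_cases hiS : i ∈ S <;> simp [hia, hiS, hm, hd] <;> omega
  have hdpos : ∀ i, 0 < d i := fun i => by
    have := ha i
    simp only [hd]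
    omega
  obtain ⟨p, w, hwp, hmove, rfl⟩ := exists_exactMove_emptying_of_two_smallest hk hn hdpos hea
    (fun i hi => Nat.sub_le_sub_right (he i hi) _) (fun h => by simpa using hSsub h)
    (fun h => by simpa using hSsub h) (by omega) (by simp only [hd]; omega) hq'
  exact exists_exactMove_of_sub (fun i => (Nat.sub_le _ _).trans (ha i)) hmove hwp

lemma exists_le_tetris_piecewise_insert_sub_one (hk : 0 < k) (hn : k < n) (hea : e ≠ a)
    (he : ∀ i ≠ a, x e ≤ x i) (hg : g < tetris n k x) :
    ∃ S : Finset (Fin n), a ∉ S ∧ e ∉ S ∧ #S + 1 = k ∧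
      g ≤ tetris n k ((insert a S).piecewise (x - 1) x) := by
  suffices ∃ S ⊆ ({a, e}ᶜ : Finset (Fin n)), #S = k - 1 ∧
      (k ≤ #{i | g < x i} ∨ ∀ i, g < x i → i ∈ insert a S) by
    obtain ⟨S, hSsub, hS, hbig⟩ := this
    refine ⟨S, fun h => by simpa using hSsub h, fun h => by simpa using hSsub h, by omega, ?_⟩
    exact le_tetris_piecewise_sub_one hk ((card_insert_le a S).trans (by omega)) hbig hg
  have hcard : k - 1 ≤ #({a, e}ᶜ : Finset (Fin n)) := by
    rw [card_compl_pair hea.symm, Fintype.card_fin]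
    omega
  rcases le_or_gt k #{i | g < x i} with hbig | hfew
  · obtain ⟨S, hSsub, hS⟩ := exists_subset_card_eq hcard
    exact ⟨S, hSsub, hS, .inl hbig⟩
  · have hge : x e ≤ g := by
      by_contra! hlt
      have hsub : univ.erase a ⊆ univ.filter (g < x ·) := fun i hi =>
        mem_filter.2 ⟨mem_univ i, hlt.trans_le (he i (ne_of_mem_erase hi))⟩
      have hle := card_le_card hsub
      rw [card_erase_of_mem (mem_univ a), card_univ, Fintype.card_fin] at hle
      omega
    have hsub : (univ.filter (g < x ·)).erase a ⊆ {a, e}ᶜ := by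
      intro i hi
      obtain ⟨hia, hgi⟩ : i ≠ a ∧ g < x i := by simpa using hi
      have hie : i ≠ e := by
        rintro rfl
        exact hgi.not_ge hge
      simp [hia, hie]
    obtain ⟨S, hbigS, hSsub, hS⟩ := exists_subsuperset_card_eq hsub
      (card_erase_le.trans (Nat.le_sub_one_of_lt hfew)) hcard
    refine ⟨S, hSsub, hS, .inr fun i hi => ?_⟩
    rw [mem_insert, or_iff_not_imp_left]
    exact fun hia => hbigS (mem_erase.2 ⟨hia, mem_filter.2 ⟨mem_univ i, hi⟩⟩)

lemma exists_exactMove_tetris_eq_and_yval_le (hpos : ∀ i, 0 < x i) (ha : ∀ i, x a ≤ x i)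
    (haS : a ∉ S) (hS : #S + 1 = k)
    (hL : tetris n k (update (S.piecewise (x - 1) x) a 0) ≤ g)
    (hH : g ≤ tetris n k ((insert a S).piecewise (x - 1) x)) :
    ∃ w, ExactMove n k x w ∧ tetris n k w = g ∧ yval n k x ≤ yval n k w := by
  rw [piecewise_insert] at hH
  obtain ⟨w, ⟨hLw, hwH⟩, hw⟩ := exists_mem_Icc_tetris_eq (by omega)
    (update_le_update_iff.2 ⟨Nat.zero_le _, fun _ _ => le_rfl⟩) hL hH
  have hwa : w a < x a := by
    have hle : w a ≤ x a - 1 := by simpa using hwH a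
    have := hpos a
    omega
  have hw_ne : ∀ i ≠ a, w i = S.piecewise (x - 1) x i := fun i hia =>
    le_antisymm (by simpa [hia] using hwH i) (by simpa [hia] using hLw i)
  have hw_ge : ∀ i ≠ a, x i - 1 ≤ w i := fun i hia => by
    rw [hw_ne i hia]
    by_cases hiS : i ∈ S <;> simp [hiS]
  have hmw : mval n w = w a := mval_eq_of_forall_le fun i => by
    obtain rfl | hia := eq_or_ne i a
    · exact le_rfl
    · have := hw_ge i hia
      have := ha i
      omega
  refine ⟨w, exactMove_of_card (M := insert a S) (by rw [card_insert_of_notMem haS, hS])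
    (fun i hi => ?_) (fun i hi => ?_), hw, ?_⟩
  · obtain rfl | hia := eq_or_ne i a
    · exact hwa
    · simpa [hw_ne i hia, (mem_insert.1 hi).resolve_left hia] using hpos i
  · obtain ⟨hia, hiS⟩ : i ≠ a ∧ i ∉ S := by simpa using hi
    simp [hw_ne i hia, hiS]
  · refine tetris_mono (by omega) fun i => ?_
    dsimp only
    rw [hmw, mval_eq_of_forall_le ha]
    obtain rfl | hia := eq_or_ne i a
    · omega
    · have := hw_ge i hia
      omega

lemma exists_exactMove_tetris_eq (hk : k + 2 ≤ n) (hn : n ≤ 2 * k) (hmg : mval n x ≤ g)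
    (hg : g < tetris n k x) :
    ∃ w, ExactMove n k x w ∧ tetris n k w = g ∧
      (mval n w = 0 ∨ yval n k x ≤ yval n k w) := by
  have : Nontrivial (Fin n) := Fin.nontrivial_iff_two_le.2 (by omega)
  obtain ⟨a, e, hea, ha, he⟩ := exists_two_smallest x
  rw [mval_eq_of_forall_le ha] at hmg
  have hzero : ∀ {w : Fin n → ℕ} {p}, w p = 0 → mval n w = 0 := fun {w p} hwp =>
    Nat.le_zero.1 (hwp ▸ mval_le w p)
  rcases Nat.eq_zero_or_pos (x a) with hxa | hxa
  · obtain ⟨w, hwa, hmove, hw⟩ := exists_exactMove_of_apply_eq_zero (by omega) hn hxa hg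
    exact ⟨w, hmove, hw, .inl (hzero hwa)⟩
  have hpos : ∀ i, 0 < x i := fun i => hxa.trans_le (ha i)
  obtain ⟨S, haS, heS, hS, hH⟩ :=
    exists_le_tetris_piecewise_insert_sub_one (by omega) (by omega) hea he hg
  rcases le_total g (tetris n k (update (S.piecewise (x - 1) x) a 0)) with hle | hge
  · obtain ⟨p, w, hwp, hmove, hw⟩ :=
      exists_exactMove_emptying_of_two_smallest hk hn hpos hea he haS heS hS hmg hle
    exact ⟨w, hmove, hw, .inl (hzero hwp)⟩
  · obtain ⟨w, hmove, hw, hy⟩ := exists_exactMove_tetris_eq_and_yval_le hpos ha haS hS hge hH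
    exact ⟨w, hmove, hw, .inr hy⟩

lemma exists_exactMove_nimValue_eq_of_mval_le (hk : k + 2 ≤ n) (hn : n ≤ 2 * k)
    (hx : mval n x < zval n k x) (hmg : mval n x ≤ g) (hg : g < tetris n k x) :
    ∃ w, ExactMove n k x w ∧ nimValue n k w = g := by
  obtain ⟨w, hmove, hw, hzero | hy⟩ := exists_exactMove_tetris_eq hk hn hmg hg
  · exact ⟨w, hmove, (nimValue_of_lt (by rw [hzero, zval]; omega)).trans hw⟩
  · refine ⟨w, hmove, (nimValue_of_lt ?_).trans hw⟩
    calc mval n w ≤ mval n x := mval_mono hmove.le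
      _ < zval n k x := hx
      _ ≤ zval n k w := Nat.add_le_add_left (strictMono_succ_choose_two.monotone hy) 1

lemma exists_exactMove_nimValue_eq_of_lt_mval (hk : k + 2 ≤ n) (hn : n ≤ 2 * k) (hgm : g < mval n x)
    (hg : g < cyclicValue (mval n x) (yval n k x)) :
    ∃ w, ExactMove n k x w ∧ nimValue n k w = g := by
  obtain ⟨q, hgq⟩ := exists_mem_triangularBlock g
  have hqy : q ≤ yval n k x :=
    le_of_mem_triangularBlock_of_lt hgq (hg.trans (cyclicValue_mem_triangularBlock _ _).2)
  set m := mval n x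
  -- Lowering the minimum by `j < q + 1` makes it congruent to `g + 1` modulo `q + 1`.
  set j := (m - (g + 1)) % (q + 1) with hj
  have hjq : j < q + 1 := Nat.mod_lt _ q.succ_pos
  have hjm : j ≤ m - (g + 1) := Nat.mod_le _ _
  have hmod : g + 1 ≡ m - j [MOD q + 1] := by
    rw [Nat.modEq_iff_dvd' (by omega), Nat.sub_right_comm, hj]
    exact Nat.dvd_sub_mod _
  obtain ⟨w, hmove, hmw, rfl⟩ :
      ∃ w, ExactMove n k x w ∧ mval n w = m - j ∧ yval n k w = q := by
    rcases Nat.eq_zero_or_pos j with hj0 | hjpos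
    · rw [hj0, Nat.sub_zero] at hmod ⊢
      refine exists_exactMove_mval_eq (by omega) hn (hqy.lt_of_ne ?_)
      rintro rfl
      exact hg.ne' (cyclicValue_eq_of_modEq hgq hgm hmod)
    · exact exists_exactMove_mval_eq_sub hk hn hjpos (by omega) (by omega) hqy
  refine ⟨w, hmove, ?_⟩
  rw [nimValue_of_le (by rw [zval, hmw]; have := hgq.1; omega), hmw]
  exact cyclicValue_eq_of_modEq hgq (by omega) hmod

lemma exists_exactMove_nimValue_eq (hk : k + 2 ≤ n) (hn : n ≤ 2 * k) (hg : g < nimValue n k x) :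
    ∃ w, ExactMove n k x w ∧ nimValue n k w = g := by
  rcases lt_or_ge (mval n x) (zval n k x) with hx | hx
  · rcases le_or_gt (mval n x) g with hmg | hgm
    · rw [nimValue_of_lt hx] at hg
      exact exists_exactMove_nimValue_eq_of_mval_le hk hn hx hmg hg
    · refine exists_exactMove_nimValue_eq_of_lt_mval hk hn hgm (hgm.trans_le ?_)
      rw [zval, Nat.one_add, Nat.lt_succ_iff] at hx
      exact hx.trans (Nat.le_add_right _ _)
  · have hgm : g < mval n x := hg.trans (nimValue_lt_mval hx)
    rw [nimValue_of_le hx] at hg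
    exact exists_exactMove_nimValue_eq_of_lt_mval hk hn hgm hg

end Reachability

lemma grundy_eq_nimValue {k : ℕ} (hk : 2 ≤ k) (x : Fin (2 * k) → ℕ) :
    grundy (2 * k) k x = nimValue (2 * k) k x :=
  grundy_eq_of_forall (by omega) (fun _ _ h => h.nimValue_ne (by omega) le_rfl)
    (fun _ _ hg => exists_exactMove_nimValue_eq (by omega) le_rfl hg) x

/-- For `k ≥ 2` and `n = 2k`, the Sprague–Grundy function of `Nim^=_{2k,k}` equals
`u(x) = T_{2k,k}(x)` when `m(x) < z(x)`, and equals
`v(x) = (z(x)-1) + ((m(x)-z(x)) mod (y(x)+1))` when `m(x) ≥ z(x)`. -/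
theorem grundy_exact_two_k (k : ℕ) (hk : 2 ≤ k) (x : Fin (2 * k) → ℕ) :
    (mval (2 * k) x < zval (2 * k) k x → grundy (2 * k) k x = tetris (2 * k) k x) ∧
    (zval (2 * k) k x ≤ mval (2 * k) x →
      grundy (2 * k) k x =
        (zval (2 * k) k x - 1) +
          (mval (2 * k) x - zval (2 * k) k x) % (yval (2 * k) k x + 1)) := by
  rw [grundy_eq_nimValue hk]
  refine ⟨nimValue_of_lt, fun h => ?_⟩
  rw [nimValue_of_le h, cyclicValue, zval, Nat.add_sub_cancel_left]
end

section
/- The Tetris function is monotone: for positions x, x' ∈ ℤ_{≥0}^n of Nim^=_{n,k}, if x'_i ≤ x_i for all i, then T_{n,k}(x') ≤ T_{n,k}(x). -/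
/-!
Raising each pile by a fixed amount turns a move into a move, because comparisons between
piles are unaffected. Hence every chain of moves from `x'` can be played from `x ≥ x'`, by never
touching the surplus `x - x'`. Since a move removes at least `k` tokens, chains from `x` have
bounded length when `k > 0`, so the suprema defining the Tetris function are genuine maxima.
-/

variable {n k m : ℕ} {x x' : Fin n → ℕ}

theorem ExactMove.add_right (h : ExactMove n k x x') (d : Fin n → ℕ) :
    ExactMove n k (x + d) (x' + d) := by
  simpa only [ExactMove, Pi.add_apply, Nat.add_le_add_iff_right, Nat.add_lt_add_iff_right] using h

theorem ExactMove.sum_add_le (h : ExactMove n k x x') : ∑ i, x' i + k ≤ ∑ i, x i := by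
  obtain ⟨hle, hcard⟩ := h
  calc ∑ i, x' i + k = ∑ i, (x' i + if x' i < x i then 1 else 0) := by
        rw [Finset.sum_add_distrib, ← Finset.card_filter, hcard]
    _ ≤ ∑ i, x i := by
        refine Finset.sum_le_sum fun i _ => ?_
        have := hle i
        split_ifs <;> omega

namespace HasChain

theorem zero (n k : ℕ) (x : Fin n → ℕ) : HasChain n k x 0 :=
  ⟨fun _ => x, rfl, fun i => i.elim0⟩

theorem exists_exactMove (h : HasChain n k x (m + 1)) :
    ∃ y, ExactMove n k x y ∧ HasChain n k y m := by
  obtain ⟨f, rfl, hf⟩ := h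
  exact ⟨f 1, hf 0, Fin.tail f, rfl, fun i => hf i.succ⟩

theorem mul_le_sum (h : HasChain n k x m) : m * k ≤ ∑ i, x i := by
  induction m generalizing x with
  | zero => simp
  | succ m ih =>
    obtain ⟨y, hxy, hy⟩ := h.exists_exactMove
    calc (m + 1) * k = m * k + k := Nat.succ_mul m k
      _ ≤ ∑ i, y i + k := Nat.add_le_add_right (ih hy) k
      _ ≤ ∑ i, x i := hxy.sum_add_le

theorem add_right (h : HasChain n k x m) (d : Fin n → ℕ) : HasChain n k (x + d) m := by
  obtain ⟨f, rfl, hf⟩ := h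
  exact ⟨fun j => f j + d, rfl, fun i => (hf i).add_right d⟩

theorem mono (h : HasChain n k x' m) (hle : x' ≤ x) : HasChain n k x m := by
  simpa only [add_tsub_cancel_of_le hle] using h.add_right (x - x')

end HasChain

theorem bddAbove_setOf_hasChain (hk : 0 < k) (x : Fin n → ℕ) :
    BddAbove {m | HasChain n k x m} :=
  ⟨∑ i, x i, fun m hm => (Nat.le_mul_of_pos_right m hk).trans (HasChain.mul_le_sum hm)⟩

/-- Monotonicity of the Tetris function: if `x' ≤ x` componentwise then
`T_{n,k}(x') ≤ T_{n,k}(x)`. -/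
theorem tetris_monotone (n k : ℕ) (hk1 : 1 ≤ k) (hkn : k ≤ n)
    (x x' : Fin n → ℕ) (hle : ∀ i, x' i ≤ x i) :
    tetris n k x' ≤ tetris n k x :=
  csSup_le_csSup (bddAbove_setOf_hasChain hk1 x) ⟨0, HasChain.zero n k x'⟩
    fun _ hm => HasChain.mono hm hle
end

section
/- The Tetris function does not decrease when a token is moved from a larger pile to a smaller one: let x ∈ ℤ_{≥0}^n and let i, j be indices with x_i < x_j. Define x' by x'_i = x_i + 1, x'_j = x_j − 1, and x'_l = x_l for all l ∉ {i, j}. Then T_{n,k}(x) ≤ T_{n,k}(x'). -/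
/-!
Since every move lowers `k` piles and lowering them by one token wastes nothing, `m` consecutive
moves from `x` exist exactly when one can choose `m` sets of `k` piles such that each pile `l` lies
in at most `x l` of them. In this form the order of the moves is irrelevant. If `x i < x j` and the
new position no longer affords the choice, then pile `j` is chosen exactly `x j` times, more often
than pile `i`, so some chosen set contains `j` but not `i`; replacing `j` by `i` in that set repairs
the choice.
-/

section Schedule

open Finset

variable {ι τ : Type*} [DecidableEq ι] [Fintype τ] {k : ℕ} {x y : ι → ℕ} {S : τ → Finset ι}

/-- A schedule of moves from the position `x`: at each time `t : τ` one token is taken from each of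
the `k` piles in `S t`, and no pile is used more often than it has tokens. Times are unordered, as
feasibility does not depend on the order of the moves. -/
structure IsSchedule (k : ℕ) (x : ι → ℕ) (S : τ → Finset ι) : Prop where
  card_eq : ∀ t, #(S t) = k
  card_filter_le : ∀ l, #{t | l ∈ S t} ≤ x l

theorem IsSchedule.mono (hS : IsSchedule k x S) (hxy : x ≤ y) : IsSchedule k y S :=
  ⟨hS.card_eq, fun l => (hS.card_filter_le l).trans (hxy l)⟩

theorem IsSchedule.card_mul_le_sum [Fintype ι] (hS : IsSchedule k x S) :
    Fintype.card τ * k ≤ ∑ l, x l :=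
  calc
    Fintype.card τ * k = ∑ t, #(S t) := by simp [hS.card_eq]
    _ = ∑ l, #{t | l ∈ S t} := by
      simpa [bipartiteAbove, bipartiteBelow] using
        sum_card_bipartiteAbove_eq_sum_card_bipartiteBelow (s := univ) (t := univ)
          fun (t : τ) l => l ∈ S t
    _ ≤ ∑ l, x l := sum_le_sum fun l _ => hS.card_filter_le l

theorem filter_mem_update [DecidableEq τ] (S : τ → Finset ι) (t : τ) (A : Finset ι) (l : ι) :
    univ.filter (l ∈ Function.update S t A ·) =
      if l ∈ A then insert t (univ.filter (l ∈ S ·)) else (univ.filter (l ∈ S ·)).erase t := by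
  ext s
  obtain rfl | hs := eq_or_ne s t <;> split_ifs <;> simp_all

theorem IsSchedule.update_exchange [DecidableEq τ] {i j : ι} {t : τ} (hS : IsSchedule k x S)
    (hj : j ∈ S t) (hi : i ∉ S t) (hxi : x i < y i) (hxj : x j ≤ y j + 1)
    (hxy : ∀ l ≠ j, x l ≤ y l) :
    IsSchedule k y (Function.update S t (insert i ((S t).erase j))) where
  card_eq s := by
    obtain rfl | hs := eq_or_ne s t
    · rw [Function.update_self, card_insert_of_notMem (by simp [hi]), card_erase_add_one hj,
        hS.card_eq]
    · rw [Function.update_of_ne hs, hS.card_eq]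
  card_filter_le l := by
    have hl := hS.card_filter_le l
    rw [filter_mem_update]
    obtain rfl | hli := eq_or_ne l i
    · rw [if_pos (mem_insert_self ..)]
      exact (card_insert_le ..).trans (by lia)
    obtain rfl | hlj := eq_or_ne l j
    · rw [if_neg (by simp [hli]), card_erase_of_mem (by simpa using hj)]
      lia
    have hmem : l ∈ insert i ((S t).erase j) ↔ l ∈ S t := by simp [hli, hlj]
    refine (congrArg card ?_).trans_le (hl.trans (hxy l hlj))
    split_ifs with h
    · rw [insert_eq_of_mem (by simpa using hmem.1 h)]
    · rw [erase_eq_of_notMem (by simpa using mt hmem.2 h)]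

theorem IsSchedule.exists_of_balance {i j : ι} (hS : IsSchedule k x S) (hij : x i < x j)
    (hxi : x i < y i) (hxj : x j ≤ y j + 1) (hxy : ∀ l ≠ j, x l ≤ y l) :
    ∃ S' : τ → Finset ι, IsSchedule k y S' := by
  classical
  by_cases hy : #{t | j ∈ S t} ≤ y j
  · refine ⟨S, hS.card_eq, fun l => ?_⟩
    obtain rfl | hlj := eq_or_ne l j
    · exact hy
    · exact (hS.card_filter_le l).trans (hxy l hlj)
  · have hlt : #{t | i ∈ S t} < #{t | j ∈ S t} := by
      have := hS.card_filter_le i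
      lia
    obtain ⟨t, hj, hi⟩ := exists_mem_notMem_of_card_lt_card hlt
    exact ⟨_, hS.update_exchange (by simpa using hj) (by simpa using hi) hxi hxj hxy⟩

theorem isSchedule_cons {m : ℕ} {A : Finset ι} {S : Fin m → Finset ι} :
    IsSchedule k x (Fin.cons A S : Fin (m + 1) → Finset ι) ↔
      #A = k ∧ (∀ l ∈ A, 0 < x l) ∧ IsSchedule k (fun l => if l ∈ A then x l - 1 else x l) S := by
  have hcount (l : ι) :
      #{t | l ∈ (Fin.cons A S : Fin (m + 1) → Finset ι) t} ≤ x l ↔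
        (l ∈ A → 0 < x l) ∧ #{t | l ∈ S t} ≤ if l ∈ A then x l - 1 else x l := by
    rw [Fin.card_filter_univ_succ]
    simp only [Fin.cons_zero, Fin.cons_succ]
    split_ifs <;> lia
  constructor
  · rintro ⟨hcard, hle⟩
    exact ⟨hcard 0, fun l => ((hcount l).1 (hle l)).1,
      fun t => hcard t.succ, fun l => ((hcount l).1 (hle l)).2⟩
  · rintro ⟨hA, hpos, hcard, hle⟩
    exact ⟨Fin.cases hA hcard, fun l => (hcount l).2 ⟨hpos l, hle l⟩⟩

end Schedule

section Chain

variable {n k m : ℕ} {x : Fin n → ℕ}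

theorem hasChain_succ :
    HasChain n k x (m + 1) ↔ ∃ y, ExactMove n k x y ∧ HasChain n k y m := by
  constructor
  · rintro ⟨f, rfl, hf⟩
    exact ⟨f 1, hf 0, Fin.tail f, rfl, fun t => hf t.succ⟩
  · rintro ⟨_, hmove, f, rfl, hf⟩
    exact ⟨Fin.cons x f, rfl, Fin.cases hmove hf⟩

theorem hasChain_iff_exists_isSchedule :
    HasChain n k x m ↔ ∃ S : Fin m → Finset (Fin n), IsSchedule k x S := by
  induction m generalizing x with
  | zero =>
    exact ⟨fun _ => ⟨Fin.elim0, fun t => t.elim0, by simp⟩,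
      fun _ => ⟨fun _ => x, rfl, fun t => t.elim0⟩⟩
  | succ m ih =>
    simp only [hasChain_succ, ih, Fin.exists_fin_succ_pi, isSchedule_cons]
    constructor
    · rintro ⟨y, ⟨hyx, hcard⟩, S, hS⟩
      refine ⟨Finset.univ.filter fun l => y l < x l, S, hcard, fun l hl => ?_, hS.mono fun l => ?_⟩
      · exact Nat.zero_lt_of_lt (Finset.mem_filter.1 hl).2
      · have := hyx l
        simp only [Finset.mem_filter, Finset.mem_univ, true_and]
        split_ifs <;> lia
    · rintro ⟨A, S, hA, hpos, hS⟩
      refine ⟨_, ⟨fun l => ?_, ?_⟩, S, hS⟩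
      · split_ifs <;> lia
      · rw [← hA]
        congr 1
        ext l
        have := hpos l
        by_cases hl : l ∈ A <;> simp_all

theorem HasChain.le_sum (hk : 1 ≤ k) (h : HasChain n k x m) : m ≤ ∑ l, x l := by
  obtain ⟨S, hS⟩ := hasChain_iff_exists_isSchedule.1 h
  calc
    m ≤ m * k := Nat.le_mul_of_pos_right m hk
    _ ≤ ∑ l, x l := by simpa using hS.card_mul_le_sum

theorem HasChain.balance {i j : Fin n} {y : Fin n → ℕ} (h : HasChain n k x m) (hij : x i < x j)
    (hxi : x i < y i) (hxj : x j ≤ y j + 1) (hxy : ∀ l ≠ j, x l ≤ y l) : HasChain n k y m := by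
  obtain ⟨S, hS⟩ := hasChain_iff_exists_isSchedule.1 h
  exact hasChain_iff_exists_isSchedule.2 (hS.exists_of_balance hij hxi hxj hxy)

end Chain

/-- The Tetris function does not decrease when a token is moved from a larger pile
to a smaller one. -/
theorem tetris_le_of_balance (n k : ℕ) (hk1 : 1 ≤ k) (hkn : k ≤ n)
    (x : Fin n → ℕ) (i j : Fin n) (hij : x i < x j)
    (x' : Fin n → ℕ)
    (hx' : x' = fun l => if l = i then x i + 1 else if l = j then x j - 1 else x l) :
    tetris n k x ≤ tetris n k x' := by
  have hbdd : BddAbove {m | HasChain n k x' m} := ⟨∑ l, x' l, fun _ hm => hm.le_sum hk1⟩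
  refine csSup_le_csSup' hbdd fun m (hm : HasChain n k x m) => hm.balance hij ?_ ?_ ?_
  · simp [hx']
  · have hji : j ≠ i := fun h => hij.ne' (congrArg x h)
    simp only [hx', if_neg hji, if_true]
    lia
  · intro l hlj
    simp only [hx', if_neg hlj]
    split_ifs with hli
    · simp [hli]
    · exact le_rfl
end
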